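/- arXiv:2201.08464 — 5 statements merged into one kernel-verified Lean document; each statement's English description precedes it below -/
import Mathlib

section
/- Let q be a prime power, let S be a nonempty finite subset of ℕ^n with all coordinates of its elements at most q−2, let m > n, and let S' = {(s, 0, …, 0) ∈ ℕ^m : s ∈ S} be the natural embedding of S into ℕ^m. Then N_m(S') = (q−1)^{m−n}·N_n(S); equivalently, the relative minimum distance is unchanged: ((q−1)^m − N_m(S'))/(q−1)^m = ((q−1)^n − N_n(S))/(q−1)^n. -/
open MvPolynomial

/-- The set of zeros of a multivariate polynomial on the torus `((F_q)ˣ)^k`. -/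
def torusZeros {K : Type} [Field K] {k : ℕ} (f : MvPolynomial (Fin k) K) :
    Set (Fin k → K) :=
  {a | (∀ i, a i ≠ 0) ∧ MvPolynomial.eval a f = 0}

/-- `N(S)`: the maximum number of torus zeros of a nonzero polynomial whose
monomial support lies in `S`. -/
noncomputable def maxTorusZeros (K : Type) [Field K] {k : ℕ} (S : Set (Fin k →₀ ℕ)) : ℕ :=
  sSup {z | ∃ f : MvPolynomial (Fin k) K, f ≠ 0 ∧
    (↑f.support : Set (Fin k →₀ ℕ)) ⊆ S ∧ z = (torusZeros f).ncard}

/-!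
A polynomial supported on the image of `S` under an injection `e` of the variables is the
renaming of a unique polynomial `f` supported on `S`. It depends only on the coordinates in the
range of `e`, so each torus zero of `f` lifts to `(q - 1) ^ (m - n)` torus zeros of the renaming,
the remaining coordinates being arbitrary units. The largest number of zeros is therefore
multiplied by `(q - 1) ^ (m - n)`, exactly as the number of points of the torus is.
-/

theorem ncard_preimage_comp {σ τ α : Type*} [Finite τ] {e : σ → τ}
    (he : Function.Injective e) (s : Set (σ → α)) :
    ((fun u : τ → α ↦ u ∘ e) ⁻¹' s).ncard
      = Nat.card α ^ (Nat.card τ - Nat.card σ) * s.ncard := by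
  classical
  let split : (τ → α) ≃ (σ → α) × (((Set.range e)ᶜ : Set τ) → α) :=
    (Equiv.piEquivPiSubtypeProd (· ∈ Set.range e) fun _ ↦ α).trans
      (((Equiv.ofInjective e he).symm.arrowCongr (Equiv.refl α)).prodCongr (Equiv.refl _))
  have preimage_eq : (fun u : τ → α ↦ u ∘ e) ⁻¹' s = split ⁻¹' (s ×ˢ Set.univ) := by
    ext u
    have fst_split : (split u).1 = u ∘ e := rfl
    simp only [Set.mem_preimage, Set.mem_prod, Set.mem_univ, and_true, fst_split]
  have card_compl : Nat.card ((Set.range e)ᶜ : Set τ) = Nat.card τ - Nat.card σ := by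
    rw [Nat.card_coe_set_eq, Set.ncard_compl, ← Nat.card_coe_set_eq,
      Nat.card_range_of_injective he]
  rw [preimage_eq, Set.ncard_preimage_of_injective_subset_range split.injective
    (split.range_eq_univ ▸ Set.subset_univ _), Set.ncard_prod, Set.ncard_univ,
    Nat.card_fun, card_compl, mul_comm]

theorem map_rename_restrictSupport {R σ τ : Type*} [CommSemiring R] (e : σ → τ)
    (S : Set (σ →₀ ℕ)) :
    (restrictSupport R S).map (rename e : MvPolynomial σ R →ₐ[R] MvPolynomial τ R).toLinearMap
      = restrictSupport R (Finsupp.mapDomain e '' S) := by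
  simp only [restrictSupport_eq_span, Submodule.map_span, Set.image_image,
    AlgHom.toLinearMap_apply, rename_monomial]

theorem image_rename_restrictSupport_sdiff_zero {R σ τ : Type*} [CommSemiring R] {e : σ → τ}
    (he : Function.Injective e) (S : Set (σ →₀ ℕ)) :
    rename e '' ((restrictSupport R S : Set (MvPolynomial σ R)) \ {0})
      = (restrictSupport R (Finsupp.mapDomain e '' S) : Set (MvPolynomial τ R)) \ {0} := by
  rw [Set.image_sdiff (rename_injective e he), Set.image_singleton, map_zero,
    ← map_rename_restrictSupport, Submodule.map_coe]
  rfl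

theorem restrictSupport_sdiff_zero_nonempty {R σ : Type*} [CommSemiring R] [Nontrivial R]
    {S : Set (σ →₀ ℕ)} (hS : S.Nonempty) :
    ((restrictSupport R S : Set (MvPolynomial σ R)) \ {0}).Nonempty := by
  obtain ⟨s, hs⟩ := hS
  exact ⟨monomial s 1, (monomial_mem_restrictSupport R).2 (.inl hs),
    monomial_eq_zero.not.2 one_ne_zero⟩

section TorusZeros

variable {K : Type} [Field K]

theorem ncard_torusZeros_eq_ncard_units {k : ℕ} (f : MvPolynomial (Fin k) K) :
    (torusZeros f).ncard = {u : Fin k → Kˣ | eval (Units.val ∘ u) f = 0}.ncard := by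
  have image_units : torusZeros f
      = (fun u : Fin k → Kˣ ↦ Units.val ∘ u) '' {u | eval (Units.val ∘ u) f = 0} := by
    ext a
    constructor
    · rintro ⟨ha, hfa⟩
      exact ⟨fun i ↦ Units.mk0 (a i) (ha i), hfa, rfl⟩
    · rintro ⟨u, hu, rfl⟩
      exact ⟨fun i ↦ (u i).ne_zero, hu⟩
  rw [image_units,
    Set.ncard_image_of_injective _ (Function.Injective.comp_left Units.val_injective)]

theorem ncard_torusZeros_rename {n m : ℕ} {e : Fin n → Fin m} (he : Function.Injective e)
    (f : MvPolynomial (Fin n) K) :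
    (torusZeros (rename e f)).ncard = (Nat.card K - 1) ^ (m - n) * (torusZeros f).ncard := by
  have zeros_rename : {u : Fin m → Kˣ | eval (Units.val ∘ u) (rename e f) = 0}
      = (fun u ↦ u ∘ e) ⁻¹' {u : Fin n → Kˣ | eval (Units.val ∘ u) f = 0} := by
    ext u
    simp only [Set.mem_ofPred_eq, Set.mem_preimage, eval_rename, Function.comp_assoc]
  rw [ncard_torusZeros_eq_ncard_units, ncard_torusZeros_eq_ncard_units, zeros_rename,
    ncard_preimage_comp he, Nat.card_units, Nat.card_fin, Nat.card_fin]

theorem maxTorusZeros_eq_sSup_image {k : ℕ} (S : Set (Fin k →₀ ℕ)) :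
    maxTorusZeros K S
      = sSup ((fun f ↦ (torusZeros f).ncard) ''
          ((restrictSupport K S : Set (MvPolynomial (Fin k) K)) \ {0})) := by
  unfold maxTorusZeros
  congr 1
  ext z
  constructor
  · rintro ⟨f, hf, hfS, rfl⟩
    exact ⟨f, ⟨hfS, hf⟩, rfl⟩
  · rintro ⟨f, ⟨hfS, hf⟩, rfl⟩
    exact ⟨f, hf, hfS, rfl⟩

theorem bddAbove_ncard_torusZeros [Finite K] {k : ℕ} (A : Set (MvPolynomial (Fin k) K)) :
    BddAbove ((fun f ↦ (torusZeros f).ncard) '' A) := by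
  refine ⟨Nat.card (Fin k → K), ?_⟩
  rintro _ ⟨f, -, rfl⟩
  exact Set.ncard_le_card _

theorem maxTorusZeros_mapDomain_image [Finite K] {n m : ℕ} {e : Fin n → Fin m}
    (he : Function.Injective e) {S : Set (Fin n →₀ ℕ)} (hS : S.Nonempty) :
    maxTorusZeros K (Finsupp.mapDomain e '' S)
      = (Nat.card K - 1) ^ (m - n) * maxTorusZeros K S := by
  have mul_mono : Monotone fun z ↦ (Nat.card K - 1) ^ (m - n) * z :=
    fun _ _ ↦ Nat.mul_le_mul_left _
  rw [maxTorusZeros_eq_sSup_image, maxTorusZeros_eq_sSup_image,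
    ← image_rename_restrictSupport_sdiff_zero he, Set.image_image,
    mul_mono.map_csSup_of_continuousAt continuous_of_discreteTopology.continuousAt
      ((restrictSupport_sdiff_zero_nonempty hS).image _) (bddAbove_ncard_torusZeros _),
    Set.image_image]
  simp only [ncard_torusZeros_rename he]

end TorusZeros

theorem pow_sub_pow_mul_div_pow {F : Type*} [Field F] {x : F} (hx : x ≠ 0) {n m : ℕ}
    (hnm : n ≤ m) (y : F) :
    (x ^ m - x ^ (m - n) * y) / x ^ m = (x ^ n - y) / x ^ n := by
  rw [← pow_sub_mul_pow x hnm, ← mul_sub, mul_div_mul_left _ _ (pow_ne_zero _ hx)]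

theorem stmt1_general (K : Type) [Field K] [Finite K] {n m : ℕ} {e : Fin n → Fin m}
    (he : Function.Injective e) {S : Set (Fin n →₀ ℕ)} (hS : S.Nonempty) :
    maxTorusZeros K (Finsupp.mapDomain e '' S)
      = (Nat.card K - 1) ^ (m - n) * maxTorusZeros K S ∧
    (((Nat.card K : ℝ) - 1) ^ m - (maxTorusZeros K (Finsupp.mapDomain e '' S) : ℝ))
        / ((Nat.card K : ℝ) - 1) ^ m
      = (((Nat.card K : ℝ) - 1) ^ n - (maxTorusZeros K S : ℝ)) / ((Nat.card K : ℝ) - 1) ^ n := by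
  have max_eq := maxTorusZeros_mapDomain_image (K := K) he hS
  have hnm : n ≤ m := by simpa only [Fintype.card_fin] using Fintype.card_le_of_injective e he
  have one_lt_card : 1 < Nat.card K := Finite.one_lt_card
  have card_sub_one_ne_zero : (Nat.card K : ℝ) - 1 ≠ 0 :=
    sub_ne_zero.2 (Nat.cast_ne_one.2 one_lt_card.ne')
  refine ⟨max_eq, ?_⟩
  rw [max_eq, Nat.cast_mul, Nat.cast_pow, Nat.cast_pred (zero_lt_one.trans one_lt_card),
    pow_sub_pow_mul_div_pow card_sub_one_ne_zero hnm]

/-- Embedding a nonempty exponent set `S ⊆ ℕ^n` (coordinates at most `q-2`) into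
`ℕ^m` for `m > n` multiplies `N` by `(q-1)^(m-n)` and leaves the relative minimum
distance unchanged. -/
theorem stmt1 (K : Type) [Field K] [Fintype K] (q : ℕ) (hq : Fintype.card K = q)
    (n m : ℕ) (hnm : n < m)
    (S : Set (Fin n →₀ ℕ)) (hSne : S.Nonempty) (hSfin : S.Finite)
    (hbound : ∀ s ∈ S, ∀ i, s i ≤ q - 2) :
    maxTorusZeros K (Finsupp.mapDomain (Fin.castLE hnm.le) '' S)
      = (q - 1) ^ (m - n) * maxTorusZeros K S ∧
    (((q : ℝ) - 1) ^ m
        - (maxTorusZeros K (Finsupp.mapDomain (Fin.castLE hnm.le) '' S) : ℝ))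
        / ((q : ℝ) - 1) ^ m
      = (((q : ℝ) - 1) ^ n - (maxTorusZeros K S : ℝ)) / ((q : ℝ) - 1) ^ n := by
  simpa only [Nat.card_eq_fintype_card, hq] using stmt1_general K (Fin.castLE_injective hnm.le) hSne
end

section
/- Let q ≥ 3 be an integer and let ℓ : ℕ → ℕ be any sequence with ℓ_j ≤ q−2 for all j. Define a_i = Π_{j=0}^{i} (q−1−ℓ_j)/(q−1) and b_i = Π_{j=0}^{i} (ℓ_j+1)/(q−1) (these are the relative minimum distance and information rate of the toric code of the box [0,ℓ_0]×⋯×[0,ℓ_i]). If a_i → δ and b_i → R as i → ∞, then δ = 0 or R = 0; i.e., the infinite family of toric codes of boxes is never good. -/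
/-!
The factors of the two products at index `j` are nonnegative with sum `q / (q - 1)`, whatever `ℓ_j`
is. By AM-GM their product is at most `(q / (2 * (q - 1))) ^ 2`, a constant below `1` because
`2 < q`. Hence `a_i * b_i` decays geometrically and `δ * R = 0`.
-/

section

open Filter Finset Topology

variable {𝕜 : Type*} [Field 𝕜] [LinearOrder 𝕜] [IsStrictOrderedRing 𝕜]

theorem mul_le_half_sq_of_add_le {a b s : 𝕜} (hab : 0 ≤ a + b) (h : a + b ≤ s) :
    a * b ≤ (s / 2) ^ 2 :=
  calc
    a * b ≤ ((a + b) / 2) ^ 2 := by linarith [four_mul_le_sq_add a b]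
    _ ≤ (s / 2) ^ 2 := by gcongr

variable [Archimedean 𝕜] [TopologicalSpace 𝕜] [OrderTopology 𝕜]

theorem tendsto_prod_range_nhds_zero_of_le {f : ℕ → 𝕜} {c : 𝕜} (hf : ∀ j, 0 ≤ f j)
    (hfc : ∀ j, f j ≤ c) (hc : c < 1) :
    Tendsto (fun n ↦ ∏ j ∈ range n, f j) atTop (𝓝 0) := by
  have hpow : Tendsto (fun n : ℕ ↦ c ^ n) atTop (𝓝 0) :=
    tendsto_pow_atTop_nhds_zero_of_lt_one ((hf 0).trans (hfc 0)) hc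
  have hle (n : ℕ) : ∏ j ∈ range n, f j ≤ c ^ n := by
    simpa only [prod_const, card_range] using
      prod_le_prod (s := range n) (fun j _ ↦ hf j) fun j _ ↦ hfc j
  exact tendsto_of_tendsto_of_tendsto_of_le_of_le tendsto_const_nhds hpow
    (fun _ ↦ prod_nonneg fun j _ ↦ hf j) hle

theorem tendsto_prod_range_mul_prod_range_nhds_zero_of_add_le {f g : ℕ → 𝕜} {s : 𝕜}
    (hf : ∀ j, 0 ≤ f j) (hg : ∀ j, 0 ≤ g j) (hfg : ∀ j, f j + g j ≤ s) (hs : s < 2) :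
    Tendsto (fun n ↦ (∏ j ∈ range n, f j) * ∏ j ∈ range n, g j) atTop (𝓝 0) := by
  have hs₀ : 0 ≤ s := (add_nonneg (hf 0) (hg 0)).trans (hfg 0)
  have hc : (s / 2) ^ 2 < 1 := pow_lt_one₀ (by linarith) (by linarith) two_ne_zero
  simp only [← prod_mul_distrib]
  exact tendsto_prod_range_nhds_zero_of_le (fun j ↦ mul_nonneg (hf j) (hg j))
    (fun j ↦ mul_le_half_sq_of_add_le (add_nonneg (hf j) (hg j)) (hfg j)) hc

theorem stmt12_general {q : 𝕜} (hq : 2 < q) {l : ℕ → 𝕜} (hl : ∀ j, l j ∈ Set.Icc (-1) (q - 1))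
    {δ R : 𝕜}
    (hδ : Tendsto (fun i ↦ ∏ j ∈ range (i + 1), ((q - 1 - l j) / (q - 1))) atTop (𝓝 δ))
    (hR : Tendsto (fun i ↦ ∏ j ∈ range (i + 1), ((l j + 1) / (q - 1))) atTop (𝓝 R)) :
    δ = 0 ∨ R = 0 := by
  have hq₁ : 0 < q - 1 := by linarith
  have hdist (j : ℕ) : 0 ≤ (q - 1 - l j) / (q - 1) :=
    div_nonneg (sub_nonneg.2 (hl j).2) hq₁.le
  have hrate (j : ℕ) : 0 ≤ (l j + 1) / (q - 1) :=
    div_nonneg (neg_le_iff_add_nonneg.1 (hl j).1) hq₁.le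
  have hsum (j : ℕ) : (q - 1 - l j) / (q - 1) + (l j + 1) / (q - 1) = q / (q - 1) := by ring
  have hlt : q / (q - 1) < 2 := (div_lt_iff₀ hq₁).2 (by linarith)
  have hzero := tendsto_prod_range_mul_prod_range_nhds_zero_of_add_le hdist hrate
    (fun j ↦ (hsum j).le) hlt
  exact mul_eq_zero.1 <| tendsto_nhds_unique (hδ.mul hR) ((tendsto_add_atTop_iff_nat 1).2 hzero)

end

/-- For the family of boxes `[0,ℓ₀] × ⋯ × [0,ℓ_i] ⊆ [0,q-2]^(i+1)`, if the relative
minimum distances converge to `δ` and the information rates converge to `R`,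
then `δ = 0` or `R = 0`: the infinite family of toric codes of boxes is never good. -/
theorem stmt12 (q : ℕ) (hq : 3 ≤ q) (l : ℕ → ℕ) (hl : ∀ j, l j ≤ q - 2)
    (δ R : ℝ)
    (hδ : Filter.Tendsto
      (fun i => ∏ j ∈ Finset.range (i + 1), (((q : ℝ) - 1 - (l j : ℝ)) / ((q : ℝ) - 1)))
      Filter.atTop (nhds δ))
    (hR : Filter.Tendsto
      (fun i => ∏ j ∈ Finset.range (i + 1), (((l j : ℝ) + 1) / ((q : ℝ) - 1)))
      Filter.atTop (nhds R)) :
    δ = 0 ∨ R = 0 := by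
  have hl' (j : ℕ) : l j + 1 ≤ q := by have := hl j; lia
  exact stmt12_general (by exact_mod_cast hq)
    (fun j ↦ ⟨by linarith [(l j).cast_nonneg (α := ℝ)], le_sub_iff_add_le.2 (mod_cast hl' j)⟩) hδ hR
end

section
/- Let q ≥ 3 be an integer and let ℓ : ℕ → ℕ be any sequence with ℓ_j ≤ q−2 for all j. For each i, let P_i = conv{0, ℓ₀·e₁, ℓ₁·e₂, …, ℓ_i·e_{i+1}} ⊆ ℝ^{i+1} be the simplex obtained by iterated direct sums of the segments [0,ℓ_j]. Then the information rate of the associated toric codes tends to zero: |P_i ∩ ℤ^{i+1}|/(q−1)^{i+1} → 0 as i → ∞. -/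
/-!
Every vertex of the simplex satisfies `0 ≤ x` and `∑ t, x t ≤ m`, where `m` bounds all `ℓ_j`. With a
slack coordinate, the lattice points of that region are the ways of writing `m` as a sum of `n + 1`
natural numbers, so there are `(n + m).choose m` of them. For fixed `m` this is polynomial in `n`,
and the exponential `(q - 1) ^ n` outgrows it.
-/

/-- The integer lattice points of `P`. -/
def latticePoints {n : ℕ} (P : Set (Fin n → ℝ)) : Set (Fin n → ℝ) :=
  {x ∈ P | ∀ i, ∃ z : ℤ, x i = (z : ℝ)}

/-- The simplex `conv{0, ℓ₀e₁, ℓ₁e₂, …, ℓ_i e_{i+1}} ⊆ ℝ^(i+1)` obtained by iterated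
direct sums of the segments `[0, ℓ_j]`. -/
noncomputable def simplexFamily (l : ℕ → ℕ) (i : ℕ) : Set (Fin (i + 1) → ℝ) :=
  convexHull ℝ
    (insert (0 : Fin (i + 1) → ℝ)
      {v | ∃ j : Fin (i + 1), v = fun t => if t = j then ((l (j : ℕ) : ℕ) : ℝ) else 0})

open Filter Topology Asymptotics

section CountingFunctions

variable (α : Type*) [Fintype α] (m : ℕ)

theorem ncard_setOf_sum_eq :
    {f : α → ℕ | ∑ a, f a = m}.ncard = (Fintype.card α).multichoose m := by
  classical
  rw [← Nat.card_coe_set_eq, ← Sym.card_sym_eq_multichoose, ← Nat.card_eq_fintype_card]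
  exact Nat.card_congr (Sym.equivNatSumOfFintype α m).symm

theorem image_comp_some_setOf_sum_eq :
    (fun f : Option α → ℕ => f ∘ some) '' {f | ∑ a, f a = m} = {f : α → ℕ | ∑ a, f a ≤ m} := by
  ext f
  constructor
  · rintro ⟨g, hg, rfl⟩
    have hg : g none + ∑ a, g (some a) = m := by rwa [← Fintype.sum_option]
    exact (Nat.le_add_left _ _).trans_eq hg
  · intro hf
    have hsum : ∑ a : Option α, a.elim (m - ∑ a, f a) f = m := by
      simpa only [Fintype.sum_option, Option.elim] using Nat.sub_add_cancel hf
    exact ⟨fun a => a.elim (m - ∑ a, f a) f, hsum, rfl⟩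

theorem injOn_comp_some_setOf_sum_eq :
    Set.InjOn (fun f : Option α → ℕ => f ∘ some) {f | ∑ a, f a = m} := by
  intro f hf g hg hfg
  have hsome (a : α) : f (some a) = g (some a) := congrFun hfg a
  have hnone : f none = g none := by
    have hsum : ∑ a, f a = ∑ a, g a := hf.trans hg.symm
    simpa only [Fintype.sum_option, hsome, Nat.add_right_cancel_iff] using hsum
  funext a
  cases a with
  | none => exact hnone
  | some a => exact hsome a

theorem ncard_setOf_sum_le :
    {f : α → ℕ | ∑ a, f a ≤ m}.ncard = (Fintype.card α + m).choose m := by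
  rw [← image_comp_some_setOf_sum_eq, (injOn_comp_some_setOf_sum_eq α m).ncard_image,
    ncard_setOf_sum_eq, Fintype.card_option, Nat.multichoose_eq, Nat.add_right_comm,
    Nat.add_sub_cancel]

end CountingFunctions

/-- The dilated corner simplex `{x : 0 ≤ x, ∑ t, x t ≤ c}` in `ℝ ^ ι`, given by its inequalities. It
contains every simplex `conv{0, ℓ₀e₁, …, ℓ_i e_{i+1}}` whose edge lengths are at most `c`. -/
def cornerSimplex (ι : Type*) [Fintype ι] (c : ℝ) : Set (ι → ℝ) :=
  {x | 0 ≤ x ∧ ∑ t, x t ≤ c}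

theorem convex_cornerSimplex (ι : Type*) [Fintype ι] (c : ℝ) : Convex ℝ (cornerSimplex ι c) := by
  have hsum : IsLinearMap ℝ fun x : ι → ℝ => ∑ t, x t :=
    ⟨fun x y => Finset.sum_add_distrib, fun a x => (Finset.mul_sum _ _ _).symm⟩
  exact (convex_Ici 0).inter (convex_halfSpace_le hsum c)

theorem latticePoints_cornerSimplex (n m : ℕ) :
    latticePoints (cornerSimplex (Fin n) m) =
      (fun f t => (f t : ℝ)) '' {f : Fin n → ℕ | ∑ t, f t ≤ m} := by
  ext x
  constructor
  · rintro ⟨⟨hx, hsum⟩, hint⟩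
    have hnat (t : Fin n) : ∃ k : ℕ, (k : ℝ) = x t := by
      obtain ⟨z, hz⟩ := hint t
      have hz_nonneg : 0 ≤ z := Int.cast_nonneg_iff.mp ((hx t).trans_eq hz)
      lift z to ℕ using hz_nonneg
      exact ⟨z, hz.symm⟩
    choose f hf using hnat
    have hsum_nat : ∑ t, f t ≤ m := by
      simp only [← hf] at hsum
      exact_mod_cast hsum
    exact ⟨f, hsum_nat, funext hf⟩
  · rintro ⟨f, hf, rfl⟩
    have hsum : ∑ t, (f t : ℝ) ≤ m := by exact_mod_cast Set.mem_ofPred.mp hf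
    exact ⟨⟨fun t => (f t).cast_nonneg, hsum⟩, fun t => ⟨f t, (Int.cast_natCast _).symm⟩⟩

theorem ncard_latticePoints_cornerSimplex (n m : ℕ) :
    (latticePoints (cornerSimplex (Fin n) m)).ncard = (n + m).choose m := by
  have hcast : Function.Injective fun (f : Fin n → ℕ) t => (f t : ℝ) := Nat.cast_injective.comp_left
  rw [latticePoints_cornerSimplex, Set.ncard_image_of_injective _ hcast, ncard_setOf_sum_le,
    Fintype.card_fin]

theorem finite_latticePoints_cornerSimplex (n m : ℕ) :
    (latticePoints (cornerSimplex (Fin n) m)).Finite := by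
  apply Set.finite_of_ncard_pos
  rw [ncard_latticePoints_cornerSimplex]
  exact Nat.choose_pos (Nat.le_add_left m n)

theorem latticePoints_mono {n : ℕ} {P Q : Set (Fin n → ℝ)} (h : P ⊆ Q) :
    latticePoints P ⊆ latticePoints Q :=
  fun _ hx => ⟨h hx.1, hx.2⟩

section BoundedEdges

variable {l : ℕ → ℕ} {i m : ℕ}

theorem simplexFamily_subset_cornerSimplex (hl : ∀ j ≤ i, l j ≤ m) :
    simplexFamily l i ⊆ cornerSimplex (Fin (i + 1)) m := by
  refine convexHull_min ?_ (convex_cornerSimplex _ _)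
  rintro _ (rfl | ⟨j, rfl⟩)
  · simp [cornerSimplex]
  · refine ⟨fun t => ?_, ?_⟩
    · dsimp only [Pi.zero_apply]
      positivity
    · simpa using hl j (Nat.lt_succ_iff.mp j.isLt)

theorem ncard_latticePoints_simplexFamily_le (hl : ∀ j ≤ i, l j ≤ m) :
    (latticePoints (simplexFamily l i)).ncard ≤ (i + 1 + m).choose m := by
  rw [← ncard_latticePoints_cornerSimplex]
  exact Set.ncard_le_ncard (latticePoints_mono (simplexFamily_subset_cornerSimplex hl))
    (finite_latticePoints_cornerSimplex _ _)

end BoundedEdges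

theorem tendsto_choose_add_div_const_pow_of_one_lt (m : ℕ) {r : ℝ} (hr : 1 < r) :
    Tendsto (fun n : ℕ => ((n + m).choose m : ℝ) / r ^ n) atTop (𝓝 0) := by
  have hchoose : (fun n : ℕ => (n.choose m : ℝ)) =o[atTop] fun n => r ^ n :=
    (isTheta_choose m).trans_isLittleO (isLittleO_pow_const_const_pow_of_one_lt m hr)
  have hshift := (hchoose.tendsto_div_nhds_zero.comp (tendsto_add_atTop_nat m)).mul_const (r ^ m)
  rw [zero_mul] at hshift
  refine hshift.congr fun n => ?_
  have hrm : r ^ m ≠ 0 := pow_ne_zero m (one_pos.trans hr).ne'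
  rw [Function.comp_apply, pow_add, div_mul_eq_mul_div, mul_div_mul_right _ _ hrm]

theorem stmt13_general (r : ℝ) (hr : 1 < r) (m : ℕ) (l : ℕ → ℕ) (hl : ∀ j, l j ≤ m) :
    Tendsto (fun i => ((latticePoints (simplexFamily l i)).ncard : ℝ) / r ^ (i + 1))
      atTop (𝓝 0) := by
  have hlimit := (tendsto_choose_add_div_const_pow_of_one_lt m hr).comp (tendsto_add_atTop_nat 1)
  refine squeeze_zero (fun i => by positivity) (fun i => ?_) hlimit
  dsimp only [Function.comp_apply]
  gcongr
  exact ncard_latticePoints_simplexFamily_le fun j _ => hl j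

/-- The information rates of the toric codes of the family of simplices
`conv{0, ℓ₀e₁, …, ℓ_i e_{i+1}}` tend to zero. -/
theorem stmt13 (q : ℕ) (hq : 3 ≤ q) (l : ℕ → ℕ) (hl : ∀ j, l j ≤ q - 2) :
    Filter.Tendsto
      (fun i => ((latticePoints (simplexFamily l i)).ncard : ℝ) / ((q : ℝ) - 1) ^ (i + 1))
      Filter.atTop (nhds 0) := by
  have hq' : (3 : ℝ) ≤ q := by exact_mod_cast hq
  exact stmt13_general (q - 1) (by linarith) (q - 2) l hl
end

section
/- Let q be a prime power and let (P_i) be a sequence of integral convex polytopes with P_i ⊆ [0,q−2]^{n_i}. Suppose the sequence (M(P_i)) is unbounded, i.e., for every N there exists i and a unimodular affine transformation A (A(x) = Mx + λ with M ∈ GL(n_i, ℤ) and λ ∈ ℤ^{n_i}) such that A([0,1]^N × {0}^{n_i−N}) ⊆ P_i. If the relative minimum distances δ(P_i) converge to a limit δ, then δ = 0. -/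
open MvPolynomial

/-- An integral convex polytope: the convex hull of a nonempty finite set of
integer lattice points. -/
def IsIntegralPolytope {n : ℕ} (P : Set (Fin n → ℝ)) : Prop :=
  ∃ V : Finset (Fin n → ℤ), V.Nonempty ∧
    P = convexHull ℝ ((fun (v : Fin n → ℤ) (i : Fin n) => (v i : ℝ)) '' ↑V)

/-- `P ⊆ [0, q-2]^n`. -/
def InBox (q : ℕ) {n : ℕ} (P : Set (Fin n → ℝ)) : Prop :=
  ∀ x ∈ P, ∀ i, 0 ≤ x i ∧ x i ≤ (q : ℝ) - 2

/-- Lattice points of `P` regarded as exponent vectors. -/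
def latticeExps {n : ℕ} (P : Set (Fin n → ℝ)) : Set (Fin n →₀ ℕ) :=
  {d | (fun i => ((d i : ℕ) : ℝ)) ∈ P}

/-- `N(P)`: the maximal number of torus zeros of a nonzero polynomial supported
on the lattice points of `P`. -/
noncomputable def NP (K : Type) [Field K] {n : ℕ} (P : Set (Fin n → ℝ)) : ℕ :=
  maxTorusZeros K (latticeExps P)

/-- The relative minimum distance `δ(P) = ((q-1)^n - N(P))/(q-1)^n`. -/
noncomputable def deltaP (K : Type) [Field K] [Fintype K] {n : ℕ}
    (P : Set (Fin n → ℝ)) : ℝ :=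
  (((Fintype.card K : ℝ) - 1) ^ n - (NP K P : ℝ)) / ((Fintype.card K : ℝ) - 1) ^ n

/-- The unimodular affine map `x ↦ Mx + λ` applied over `ℝ`. -/
def affApply {n : ℕ} (M : Matrix (Fin n) (Fin n) ℤ) (lam : Fin n → ℤ)
    (x : Fin n → ℝ) : Fin n → ℝ :=
  fun i => (∑ j, (M i j : ℝ) * x j) + (lam i : ℝ)

/-- `M(P) ≥ N`: some unimodular affine image of the cube `[0,1]^N × {0}^(n-N)`
is contained in `P`. -/
def HasUnitCube {n : ℕ} (P : Set (Fin n → ℝ)) (N : ℕ) : Prop :=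
  N ≤ n ∧ ∃ (M : Matrix (Fin n) (Fin n) ℤ) (lam : Fin n → ℤ), IsUnit M.det ∧
    ∀ x : Fin n → ℝ,
      (∀ t : Fin n, ((t : ℕ) < N → 0 ≤ x t ∧ x t ≤ 1) ∧ (N ≤ (t : ℕ) → x t = 0)) →
      affApply M lam x ∈ P

/-!
A unimodular image of the cube `[0,1]^N` inside `P` places the lattice points
`λ + ∑_{t ∈ T} M_t`, for `T ⊆ S` with `#S = N`, in `P`, where `M_t` is the `t`-th column of `M`.
The alternating sum of the corresponding monomials factors on the torus as
`x^λ ∏_{t ∈ S} (1 - x^{M_t})`. Since `M` is unimodular, `x ↦ (x^{M_t})_t` permutes the torus, so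
this polynomial is nonzero at a proportion `(1 - 1/(q-1))^N` of its points. Hence
`δ(P) ≤ (1 - 1/(q-1))^N`, which is arbitrarily small as `N` grows.
-/

section MonomialMap

variable {G ι κ τ : Type*} [CommGroup G] [Fintype ι]

theorem zpow_finset_sum (a : G) (s : Finset κ) (f : κ → ℤ) :
    a ^ (∑ t ∈ s, f t) = ∏ t ∈ s, a ^ f t := by
  simpa only [← ofAdd_sum, zpowersHom_apply, toAdd_ofAdd] using
    map_prod (zpowersHom G a) (fun t ↦ Multiplicative.ofAdd (f t)) s

/-- The monomial map `u ↦ (u^{M_t})_t` of tori, where `M_t` is the `t`-th column of the integer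
matrix `M`. Unimodular changes of exponents act on the torus by such maps. -/
def monomialMap (M : Matrix ι κ ℤ) (u : ι → G) : κ → G :=
  fun t ↦ ∏ i, u i ^ M i t

theorem monomialMap_mul [Fintype κ] (M : Matrix ι κ ℤ) (M' : Matrix κ τ ℤ) (u : ι → G) :
    monomialMap (M * M') u = monomialMap M' (monomialMap M u) := by
  funext t
  calc ∏ i, u i ^ (∑ j, M i j * M' j t)
      = ∏ i, ∏ j, (u i ^ M i j) ^ M' j t := by simp only [zpow_finset_sum, zpow_mul]
    _ = ∏ j, (∏ i, u i ^ M i j) ^ M' j t := by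
      rw [Finset.prod_comm]
      simp only [Finset.prod_zpow]

variable [DecidableEq ι]

theorem monomialMap_one (u : ι → G) : monomialMap (1 : Matrix ι ι ℤ) u = u := by
  funext t
  simp [monomialMap, Matrix.one_apply]

theorem monomialMap_bijective {M : Matrix ι ι ℤ} (hM : IsUnit M.det) :
    Function.Bijective (monomialMap M : (ι → G) → ι → G) := by
  refine Function.bijective_iff_has_inverse.mpr ⟨monomialMap M⁻¹, fun u ↦ ?_, fun u ↦ ?_⟩
  · rw [← monomialMap_mul, Matrix.mul_nonsing_inv M hM, monomialMap_one]
  · rw [← monomialMap_mul, Matrix.nonsing_inv_mul M hM, monomialMap_one]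

end MonomialMap

section Counting

variable {ι : Type*} [Fintype ι]

theorem ncard_setOf_forall_mem_ne {α : Type*} [Finite α] (S : Finset ι) (a : ι → α) :
    ({v : ι → α | ∀ t ∈ S, v t ≠ a t}.ncard : ℝ) =
      (1 - (Nat.card α : ℝ)⁻¹) ^ S.card * Nat.card α ^ Fintype.card ι := by
  classical
  have := Fintype.ofFinite α
  have hpi : {v : ι → α | ∀ t ∈ S, v t ≠ a t} =
      Fintype.piFinset fun t ↦ if t ∈ S then {a t}ᶜ else Finset.univ := by
    ext v
    simp only [Set.mem_ofPred_eq, Finset.mem_coe, Fintype.mem_piFinset]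
    refine forall_congr' fun t ↦ ?_
    split_ifs with ht <;> simp [ht]
  have hfactor (t : ι) : ((if t ∈ S then {a t}ᶜ else Finset.univ : Finset α).card : ℝ) =
      (if t ∈ S then 1 - (Nat.card α : ℝ)⁻¹ else 1) * Nat.card α := by
    have : Nonempty α := ⟨a t⟩
    have hcard : (Nat.card α : ℝ) ≠ 0 := Nat.cast_ne_zero.mpr Nat.card_pos.ne'
    split_ifs
    · rw [Finset.card_compl, Finset.card_singleton, ← Nat.card_eq_fintype_card,
        Nat.cast_sub Nat.card_pos, Nat.cast_one, sub_mul, one_mul, inv_mul_cancel₀ hcard]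
    · rw [Finset.card_univ, one_mul, Nat.card_eq_fintype_card]
  rw [hpi, Set.ncard_coe_finset, Fintype.card_piFinset, Nat.cast_prod,
    Finset.prod_congr rfl fun t _ ↦ hfactor t, Finset.prod_mul_distrib, Finset.prod_ite_mem,
    Finset.univ_inter, Finset.prod_const, Finset.prod_const, Finset.card_univ]

theorem ncard_setOf_forall_monomialMap_ne_one {G : Type*} [CommGroup G] [Finite G] [DecidableEq ι]
    {M : Matrix ι ι ℤ} (hM : IsUnit M.det) (S : Finset ι) :
    ({u : ι → G | ∀ t ∈ S, monomialMap M u t ≠ 1}.ncard : ℝ) =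
      (1 - (Nat.card G : ℝ)⁻¹) ^ S.card * Nat.card G ^ Fintype.card ι := by
  have hbij := monomialMap_bijective (G := G) hM
  have hpreimage : {u : ι → G | ∀ t ∈ S, monomialMap M u t ≠ 1} =
      monomialMap M ⁻¹' {v | ∀ t ∈ S, v t ≠ 1} := Set.ext fun _ ↦ Iff.rfl
  rw [hpreimage, Set.ncard_preimage_of_injective_subset_range hbij.injective
    (hbij.surjective.range_eq ▸ Set.subset_univ _), ncard_setOf_forall_mem_ne S fun _ ↦ (1 : G)]

end Counting

section CubePolynomial

variable {ι κ : Type*}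

/-- The vertex `λ + ∑_{t ∈ T} M_t` of the affine cube spanned at `λ` by the columns of `M`. -/
def cubeVertex (M : Matrix ι κ ℤ) (lam : ι → ℤ) (T : Finset κ) : ι → ℤ :=
  fun i ↦ ∑ t ∈ T, M i t + lam i

theorem cubeVertex_injective [Fintype κ] {M : Matrix ι κ ℤ} (hM : Function.Injective M.mulVec)
    (lam : ι → ℤ) : Function.Injective (cubeVertex M lam) := by
  classical
  intro T T' h
  have hvec : M.mulVec (fun t ↦ if t ∈ T then 1 else 0) =
      M.mulVec (fun t ↦ if t ∈ T' then 1 else 0) := by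
    funext i
    simpa [cubeVertex, Matrix.mulVec, dotProduct] using congrFun h i
  ext t
  have ht := congrFun (hM hvec) t
  by_cases hT : t ∈ T <;> by_cases hT' : t ∈ T' <;> simp_all

variable [Fintype ι]

/-- The vertex `cubeVertex M lam T` as an exponent vector. Its negative coordinates are truncated to
`0`, so this is faithful only for vertices in the nonnegative orthant. -/
noncomputable def cubeExponent (M : Matrix ι κ ℤ) (lam : ι → ℤ) (T : Finset κ) : ι →₀ ℕ :=
  Finsupp.equivFunOnFinite.symm fun i ↦ (cubeVertex M lam T i).toNat

theorem natCast_cubeExponent {M : Matrix ι κ ℤ} {lam : ι → ℤ} {T : Finset κ}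
    (hT : 0 ≤ cubeVertex M lam T) (i : ι) : (cubeExponent M lam T i : ℤ) = cubeVertex M lam T i :=
  Int.toNat_of_nonneg (hT i)

theorem cubeExponent_injOn [Fintype κ] {M : Matrix ι κ ℤ} (hM : Function.Injective M.mulVec)
    (lam : ι → ℤ) : Set.InjOn (cubeExponent M lam) {T | 0 ≤ cubeVertex M lam T} := by
  intro T hT T' hT' h
  refine cubeVertex_injective hM lam (funext fun i ↦ ?_)
  rw [← natCast_cubeExponent hT, h, natCast_cubeExponent hT']

/-- The alternating sum of the monomials at the vertices of a cube, which factors on the torus as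
`x^λ ∏_{t ∈ S} (1 - x^{M_t})`. -/
noncomputable def cubePolynomial (R : Type*) [CommRing R] (M : Matrix ι κ ℤ) (lam : ι → ℤ)
    (S : Finset κ) : MvPolynomial ι R :=
  ∑ T ∈ S.powerset, monomial (cubeExponent M lam T) ((-1) ^ T.card)

variable {R : Type*} [CommRing R] {M : Matrix ι κ ℤ} {lam : ι → ℤ} {S : Finset κ}

theorem exists_cubeExponent_eq_of_mem_support {d : ι →₀ ℕ}
    (hd : d ∈ (cubePolynomial R M lam S).support) : ∃ T ⊆ S, cubeExponent M lam T = d := by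
  classical
  obtain ⟨T, hT, hdT⟩ := Finset.mem_biUnion.mp (support_sum hd)
  exact ⟨T, Finset.mem_powerset.mp hT, (Finset.mem_singleton.mp (support_monomial_subset hdT)).symm⟩

theorem cubePolynomial_ne_zero [Fintype κ] [Nontrivial R] (hM : Function.Injective M.mulVec)
    (hS : ∀ T ⊆ S, 0 ≤ cubeVertex M lam T) : cubePolynomial R M lam S ≠ 0 := by
  classical
  have hcoeff : coeff (cubeExponent M lam ∅) (cubePolynomial R M lam S) = 1 := by
    rw [cubePolynomial, coeff_sum, Finset.sum_eq_single_of_mem ∅ (Finset.empty_mem_powerset S)]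
    · simp
    · intro T hT hne
      rw [coeff_monomial, if_neg]
      exact fun h ↦ hne (cubeExponent_injOn hM lam (hS T (Finset.mem_powerset.mp hT))
        (hS ∅ S.empty_subset) h)
  intro h
  rw [h, coeff_zero] at hcoeff
  exact zero_ne_one hcoeff

theorem prod_zpow_cubeVertex {G : Type*} [CommGroup G] (T : Finset κ) (u : ι → G) :
    ∏ i, u i ^ cubeVertex M lam T i = (∏ i, u i ^ lam i) * ∏ t ∈ T, monomialMap M u t := by
  simp only [cubeVertex, monomialMap, zpow_add, zpow_finset_sum]
  rw [Finset.prod_mul_distrib, Finset.prod_comm, mul_comm]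

theorem eval_cubePolynomial (hS : ∀ T ⊆ S, 0 ≤ cubeVertex M lam T) (u : ι → Rˣ) :
    eval (fun i ↦ (u i : R)) (cubePolynomial R M lam S) =
      ((∏ i, u i ^ lam i : Rˣ) : R) * ∏ t ∈ S, (1 - ((monomialMap M u t : Rˣ) : R)) := by
  classical
  have hmonomial (T : Finset κ) (hT : T ∈ S.powerset) :
      eval (fun i ↦ (u i : R)) (monomial (cubeExponent M lam T) ((-1) ^ T.card)) =
        ((∏ i, u i ^ lam i : Rˣ) : R) *
          ((-1) ^ T.card * ∏ t ∈ T, ((monomialMap M u t : Rˣ) : R)) := by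
    have hpow : ∏ i, (u i : R) ^ cubeExponent M lam T i =
        ((∏ i, u i ^ cubeVertex M lam T i : Rˣ) : R) := by
      rw [Units.coe_prod]
      refine Finset.prod_congr rfl fun i _ ↦ ?_
      rw [← natCast_cubeExponent (hS T (Finset.mem_powerset.mp hT)), zpow_natCast,
        Units.val_pow_eq_pow_val]
    rw [eval_monomial, Finsupp.prod_fintype _ _ fun _ ↦ pow_zero _, hpow, prod_zpow_cubeVertex,
      Units.val_mul, Units.coe_prod _ T]
    ring
  rw [cubePolynomial, map_sum, Finset.sum_congr rfl hmonomial, ← Finset.mul_sum, Finset.prod_sub]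
  simp only [Finset.prod_const_one, mul_one]

theorem eval_cubePolynomial_ne_zero_iff [IsDomain R] (hS : ∀ T ⊆ S, 0 ≤ cubeVertex M lam T)
    (u : ι → Rˣ) :
    eval (fun i ↦ (u i : R)) (cubePolynomial R M lam S) ≠ 0 ↔
      ∀ t ∈ S, monomialMap M u t ≠ 1 := by
  rw [eval_cubePolynomial hS, ne_eq, (Units.isUnit _).mul_right_eq_zero, ← ne_eq,
    Finset.prod_ne_zero_iff]
  simp only [sub_ne_zero, ne_comm (a := (1 : R)), ne_eq, Units.val_eq_one]

end CubePolynomial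

section TorusZeros

variable {K : Type} [Field K]

theorem ncard_torusZeros {k : ℕ} (f : MvPolynomial (Fin k) K) :
    (torusZeros f).ncard = {u : Fin k → Kˣ | eval (fun i ↦ (u i : K)) f = 0}.ncard := by
  have hinj : Function.Injective fun (u : Fin k → Kˣ) i ↦ (u i : K) :=
    fun u v h ↦ funext fun i ↦ Units.ext (congrFun h i)
  rw [← Set.ncard_image_of_injective _ hinj]
  congr 1
  ext a
  constructor
  · rintro ⟨ha, hf⟩
    exact ⟨fun i ↦ Units.mk0 (a i) (ha i), hf, rfl⟩
  · rintro ⟨u, hu, rfl⟩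
    exact ⟨fun i ↦ (u i).ne_zero, hu⟩

variable [Finite K]

theorem ncard_torusZeros_le {k : ℕ} (f : MvPolynomial (Fin k) K) :
    (torusZeros f).ncard ≤ Nat.card Kˣ ^ k := by
  rw [ncard_torusZeros]
  simpa only [Nat.card_fun, Nat.card_fin] using
    Set.ncard_le_card {u : Fin k → Kˣ | eval (fun i ↦ (u i : K)) f = 0}

theorem maxTorusZeros_le {k : ℕ} (S : Set (Fin k →₀ ℕ)) :
    maxTorusZeros K S ≤ Nat.card Kˣ ^ k := by
  refine csSup_le' ?_
  rintro z ⟨f, -, -, rfl⟩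
  exact ncard_torusZeros_le f

theorem ncard_torusZeros_le_maxTorusZeros {k : ℕ} {S : Set (Fin k →₀ ℕ)}
    {f : MvPolynomial (Fin k) K} (hf : f ≠ 0) (hS : ↑f.support ⊆ S) :
    (torusZeros f).ncard ≤ maxTorusZeros K S := by
  refine le_csSup ⟨Nat.card Kˣ ^ k, ?_⟩ ⟨f, hf, hS, rfl⟩
  rintro z ⟨g, -, -, rfl⟩
  exact ncard_torusZeros_le g

end TorusZeros

section RelativeMinimumDistance

variable {K : Type} [Field K] [Fintype K] {n : ℕ} {P : Set (Fin n → ℝ)}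

variable (K P) in
theorem deltaP_eq_one_sub : deltaP K P = 1 - NP K P / (Nat.card Kˣ : ℝ) ^ n := by
  have hcard : (Fintype.card K : ℝ) - 1 = Nat.card Kˣ := by
    rw [← Nat.card_eq_fintype_card, Nat.card_eq_card_units_add_one, Nat.cast_add_one,
      add_sub_cancel_right]
  have hpos : (Nat.card Kˣ : ℝ) ^ n ≠ 0 := pow_ne_zero n (Nat.cast_ne_zero.mpr Nat.card_pos.ne')
  rw [deltaP, hcard, sub_div, div_self hpos]

variable (K P) in
theorem deltaP_nonneg : 0 ≤ deltaP K P := by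
  rw [deltaP_eq_one_sub, sub_nonneg]
  exact div_le_one_of_le₀ (mod_cast maxTorusZeros_le (latticeExps P)) (by positivity)

theorem deltaP_le_of_support_subset {f : MvPolynomial (Fin n) K} (hf : f ≠ 0)
    (hP : ↑f.support ⊆ latticeExps P) :
    deltaP K P ≤
      {u : Fin n → Kˣ | eval (fun i ↦ (u i : K)) f ≠ 0}.ncard / (Nat.card Kˣ : ℝ) ^ n := by
  have hzeros := ncard_torusZeros_le_maxTorusZeros hf hP
  have hpartition := Set.ncard_add_ncard_compl {u : Fin n → Kˣ | eval (fun i ↦ (u i : K)) f = 0}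
  rw [← ncard_torusZeros, Set.compl_ofPred, Nat.card_fun, Nat.card_fin] at hpartition
  have hpos : 0 < (Nat.card Kˣ : ℝ) ^ n := pow_pos (Nat.cast_pos.mpr Nat.card_pos) n
  rw [deltaP_eq_one_sub, sub_le_iff_le_add, ← add_div, one_le_div hpos, add_comm]
  exact_mod_cast hpartition.symm.le.trans (Nat.add_le_add_right hzeros _)

end RelativeMinimumDistance

namespace HasUnitCube

variable {n : ℕ} {P : Set (Fin n → ℝ)}

theorem anti {N N' : ℕ} (h : HasUnitCube P N') (hN : N ≤ N') : HasUnitCube P N := by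
  obtain ⟨hn, M, lam, hM, hcube⟩ := h
  refine ⟨hN.trans hn, M, lam, hM, fun x hx ↦ hcube x fun t ↦ ⟨fun _ ↦ ?_, fun ht ↦ ?_⟩⟩
  · rcases lt_or_ge (t : ℕ) N with ht | ht
    · exact (hx t).1 ht
    · simp [(hx t).2 ht]
  · exact (hx t).2 (hN.trans ht)

theorem exists_cubeVertex_mem {N : ℕ} (h : HasUnitCube P N) :
    ∃ (M : Matrix (Fin n) (Fin n) ℤ) (lam : Fin n → ℤ) (S : Finset (Fin n)),
      IsUnit M.det ∧ S.card = N ∧ ∀ T ⊆ S, (fun i ↦ (cubeVertex M lam T i : ℝ)) ∈ P := by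
  obtain ⟨hN, M, lam, hM, hcube⟩ := h
  refine ⟨M, lam, Finset.univ.filter fun t ↦ (t : ℕ) < N, hM, ?_, fun T hT ↦ ?_⟩
  · rw [Fin.card_filter_val_lt, min_eq_right hN]
  · have hvertex : affApply M lam (fun t ↦ if t ∈ T then 1 else 0) =
        fun i ↦ (cubeVertex M lam T i : ℝ) := by
      funext i
      simp [affApply, cubeVertex]
    rw [← hvertex]
    refine hcube _ fun t ↦ ⟨fun _ ↦ by split_ifs <;> simp, fun ht ↦ if_neg fun htT ↦ ?_⟩
    exact ht.not_gt (Finset.mem_filter.mp (hT htT)).2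

theorem deltaP_le {K : Type} [Field K] [Fintype K] {N : ℕ} (h : HasUnitCube P N)
    (hP : ∀ x ∈ P, 0 ≤ x) : deltaP K P ≤ (1 - (Nat.card Kˣ : ℝ)⁻¹) ^ N := by
  obtain ⟨M, lam, S, hM, rfl, hmem⟩ := h.exists_cubeVertex_mem
  have hnonneg (T : Finset (Fin n)) (hT : T ⊆ S) : 0 ≤ cubeVertex M lam T :=
    fun i ↦ Int.cast_nonneg_iff.mp (hP _ (hmem T hT) i)
  have hne : cubePolynomial K M lam S ≠ 0 :=
    cubePolynomial_ne_zero
      (Matrix.mulVec_injective_of_isUnit ((Matrix.isUnit_iff_isUnit_det M).mpr hM)) hnonneg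
  have hsupport : ↑(cubePolynomial K M lam S).support ⊆ latticeExps P := by
    intro d hd
    obtain ⟨T, hT, rfl⟩ := exists_cubeExponent_eq_of_mem_support hd
    have hcast (i : Fin n) : (cubeExponent M lam T i : ℝ) = cubeVertex M lam T i :=
      mod_cast congrArg (Int.cast : ℤ → ℝ) (natCast_cubeExponent (hnonneg T hT) i)
    simpa only [latticeExps, Set.mem_ofPred_eq, hcast] using hmem T hT
  have hnonzeros : {u : Fin n → Kˣ | eval (fun i ↦ (u i : K)) (cubePolynomial K M lam S) ≠ 0} =
      {u | ∀ t ∈ S, monomialMap M u t ≠ 1} :=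
    Set.ext (eval_cubePolynomial_ne_zero_iff hnonneg)
  have hpos : 0 < (Nat.card Kˣ : ℝ) ^ n := pow_pos (Nat.cast_pos.mpr Nat.card_pos) n
  calc deltaP K P
      ≤ {u : Fin n → Kˣ | ∀ t ∈ S, monomialMap M u t ≠ 1}.ncard / (Nat.card Kˣ : ℝ) ^ n :=
        hnonzeros ▸ deltaP_le_of_support_subset hne hsupport
    _ = (1 - (Nat.card Kˣ : ℝ)⁻¹) ^ S.card := by
        rw [ncard_setOf_forall_monomialMap_ne_one hM, Fintype.card_fin,
          mul_div_cancel_right₀ _ hpos.ne']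

end HasUnitCube

theorem frequently_hasUnitCube {n : ℕ → ℕ} {P : ∀ i, Set (Fin (n i) → ℝ)}
    (hM : ∀ N, ∃ i, HasUnitCube (P i) N) (N : ℕ) : ∃ᶠ i in Filter.atTop, HasUnitCube (P i) N := by
  refine Filter.frequently_atTop.mpr fun m ↦ ?_
  obtain ⟨i, hi⟩ := hM (max N ((Finset.range m).sup n + 1))
  refine ⟨i, ?_, hi.anti (le_max_left _ _)⟩
  by_contra him
  have hle : n i ≤ (Finset.range m).sup n := Finset.le_sup (Finset.mem_range.mpr (not_le.mp him))
  have hlt : (Finset.range m).sup n < n i := (le_max_right _ _).trans hi.1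
  exact hle.not_gt hlt

theorem stmt15_general (K : Type) [Field K] [Fintype K] (n : ℕ → ℕ)
    (P : ∀ i, Set (Fin (n i) → ℝ)) (hP : ∀ i, ∀ x ∈ P i, 0 ≤ x)
    (hM : ∀ N, ∃ i, HasUnitCube (P i) N) :
    MapClusterPt 0 Filter.atTop fun i ↦ deltaP K (P i) := by
  have hcard : (1 : ℝ) ≤ Nat.card Kˣ := Nat.one_le_cast.mpr Nat.card_pos
  have hpow : Filter.Tendsto (fun N : ℕ ↦ (1 - (Nat.card Kˣ : ℝ)⁻¹) ^ N) Filter.atTop (nhds 0) :=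
    tendsto_pow_atTop_nhds_zero_of_lt_one (sub_nonneg.mpr (inv_le_one_of_one_le₀ hcard))
      (sub_lt_self 1 (by positivity))
  refine (nhds_basis_zero_abs_lt ℝ).mapClusterPt_iff_frequently.mpr fun ε hε ↦ ?_
  obtain ⟨N, hN⟩ := (hpow.eventually_lt_const hε).exists
  refine (frequently_hasUnitCube hM N).mono fun i hi ↦ ?_
  exact (abs_of_nonneg (deltaP_nonneg K (P i))).trans_lt ((hi.deltaP_le (hP i)).trans_lt hN)

/-- If the polytopes of an infinite family contain unimodular unit hypercubes of
unbounded dimension, then the limit of the relative minimum distances is `0`. -/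
theorem stmt15 (K : Type) [Field K] [Fintype K] (q : ℕ) (hq : Fintype.card K = q)
    (n : ℕ → ℕ) (P : ∀ i, Set (Fin (n i) → ℝ))
    (hpoly : ∀ i, IsIntegralPolytope (P i)) (hbox : ∀ i, InBox q (P i))
    (hM : ∀ N, ∃ i, HasUnitCube (P i) N)
    (δ : ℝ)
    (hδ : Filter.Tendsto (fun i => deltaP K (P i)) Filter.atTop (nhds δ)) :
    δ = 0 := by
  have hcluster := stmt15_general K n P (fun i x hx j ↦ (hbox i x hx j).1) hM
  exact (eq_of_nhds_neBot (hcluster.clusterPt.mono hδ)).symm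
end

section
/- Let q be a prime power and let (P_i) be a sequence of integral convex polytopes with P_i ⊆ [0,q−2]^{n_i}. Then the sequence (M(P_i)) is unbounded if and only if the sequence (L(P_i)) of full Minkowski lengths is unbounded. That is: (for every N there exists i with M(P_i) ≥ N) if and only if (for every N there exists i with L(P_i) ≥ N). -/
open Pointwise

/-- A lattice polytope of positive dimension: an integral convex polytope that is
not a single point. -/
def IsPosDimLatticePolytope {n : ℕ} (Q : Set (Fin n → ℝ)) : Prop :=
  IsIntegralPolytope Q ∧ ¬ Q.Subsingleton

/-- `L(P) ≥ N`: some lattice subpolytope of `P` is the Minkowski sum of at least `N`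
lattice polytopes of positive dimension. -/
def HasMinkowskiLength {n : ℕ} (P : Set (Fin n → ℝ)) (N : ℕ) : Prop :=
  ∃ Q : Set (Fin n → ℝ), Q ⊆ P ∧ IsIntegralPolytope Q ∧
    ∃ l : ℕ, N ≤ l ∧ ∃ Qs : Fin l → Set (Fin n → ℝ),
      (∀ j, IsPosDimLatticePolytope (Qs j)) ∧ Q = ∑ j, Qs j

/-!
A unimodular image of the unit cube is a translated zonotope spanned by columns of a unimodular
matrix, hence a Minkowski sum of lattice segments. Conversely, a Minkowski sum of `l` lattice
polytopes of positive dimension contains a translated zonotope spanned by primitive vectors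
`p 1, …, p l`. If the ambient set has sup-norm diameter at most `D`, then `∑ j, |p j i| ≤ D` for
every coordinate `i`, so each `p j` takes at most `2 * D + 1` values and each coordinate is nonzero
in at most `D` of the `p j`. By Bézout there is an integral functional `c j` with `c j ⬝ᵥ p j = 1`
that is supported on at most `2 * D + 1` coordinates, and therefore vanishes on all but
`(2 * D + 1) * D` of the `p k`. A greedy choice among the `p j` makes the matrix of pairings
unitriangular, and such vectors extend to a basis of `ℤ^n`.
-/

theorem extend_zero_mem_Icc {α β R : Type*} [Zero R] [One R] [Preorder R] [ZeroLEOneClass R]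
    (e : α → β) {t : α → R} (ht : t ∈ Set.Icc 0 1) : Function.extend e t 0 ∈ Set.Icc 0 1 := by
  classical
  constructor <;> intro j <;> rw [Function.extend_def] <;> split_ifs
  exacts [ht.1 _, le_rfl, ht.2 _, zero_le_one]

section Zonotope

variable {ι κ E : Type*} [Fintype ι] [Fintype κ] [AddCommGroup E] [Module ℝ E]

theorem sum_segment_add_eq_vadd_parallelepiped (a v : ι → E) :
    ∑ j, segment ℝ (a j) (a j + v j) = (∑ j, a j) +ᵥ parallelepiped v := by
  have translate (j : ι) : segment ℝ (a j) (a j + v j) = {a j} + segment ℝ 0 (v j) := by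
    rw [Set.singleton_add, segment_translate_image, add_zero]
  simp_rw [translate, Finset.sum_add_distrib, Set.finsetSum_singleton,
    parallelepiped_eq_sum_segment]
  exact Set.singleton_vadd

theorem parallelepiped_comp_subset {e : κ → ι} (he : Function.Injective e) (v : ι → E) :
    parallelepiped (v ∘ e) ⊆ parallelepiped v := by
  rintro _ ⟨t, ht, rfl⟩
  refine ⟨Function.extend e t 0, extend_zero_mem_Icc e ht,
    (Fintype.sum_of_injective e he _ _ (fun j hj => ?_) fun k => ?_).symm⟩
  · rw [Function.extend_apply' _ _ _ hj, Pi.zero_apply, zero_smul]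
  · rw [he.extend_apply, Function.comp_apply]

theorem sum_abs_le_of_vadd_parallelepiped_dist_le {D : ℝ} (x : κ → ℝ) (v : ι → κ → ℝ)
    (h : ∀ y ∈ x +ᵥ parallelepiped v, ∀ z ∈ x +ᵥ parallelepiped v, dist y z ≤ D) (i : κ) :
    ∑ j, |v j i| ≤ D := by
  let vertex (s : ι → Prop) [DecidablePred s] : κ → ℝ := ∑ j, (if s j then (1 : ℝ) else 0) • v j
  have vertex_mem (s : ι → Prop) [DecidablePred s] :
      x +ᵥ vertex s ∈ x +ᵥ parallelepiped v := by
    refine Set.vadd_mem_vadd_set ⟨_, ⟨fun j => ?_, fun j => ?_⟩, rfl⟩ <;>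
      dsimp only [Pi.zero_apply, Pi.one_apply] <;> split_ifs <;> norm_num
  have vertex_sub : (vertex (0 ≤ v · i) - vertex (¬ 0 ≤ v · i)) i = ∑ j, |v j i| := by
    simp only [vertex, Pi.sub_apply, Finset.sum_apply, Pi.smul_apply, smul_eq_mul,
      ← Finset.sum_sub_distrib]
    refine Finset.sum_congr rfl fun j _ => ?_
    by_cases hj : 0 ≤ v j i
    · simp [hj, abs_of_nonneg]
    · simp [hj, abs_of_neg (not_le.1 hj)]
  calc ∑ j, |v j i| ≤ dist (vertex (0 ≤ v · i) i) (vertex (¬ 0 ≤ v · i) i) :=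
        vertex_sub ▸ le_abs_self _
    _ ≤ dist (vertex (0 ≤ v · i)) (vertex (¬ 0 ≤ v · i)) := dist_le_pi_dist _ _ i
    _ = dist (x +ᵥ vertex (0 ≤ v · i)) (x +ᵥ vertex (¬ 0 ≤ v · i)) := (dist_add_left _ _ _).symm
    _ ≤ D := h _ (vertex_mem _) _ (vertex_mem _)

end Zonotope

section PrimitiveVector

theorem exists_pos_smul_eq_gcd_eq_one {ι : Type*} [Fintype ι] {v : ι → ℤ} (hv : v ≠ 0) :
    ∃ g : ℤ, 0 < g ∧ ∃ p : ι → ℤ, v = g • p ∧ Finset.univ.gcd p = 1 := by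
  obtain ⟨i, hi⟩ := Function.ne_iff.1 hv
  obtain ⟨p, hvp, hp⟩ := Finset.extract_gcd v ⟨i, Finset.mem_univ i⟩
  have gcd_ne_zero : Finset.univ.gcd v ≠ 0 := fun h =>
    hi (Finset.gcd_eq_zero_iff.1 h i (Finset.mem_univ i))
  have gcd_nonneg : 0 ≤ Finset.univ.gcd v := Int.nonneg_of_normalize_eq_self Finset.normalize_gcd
  exact ⟨_, gcd_nonneg.lt_of_ne' gcd_ne_zero, p, funext fun i => hvp i (Finset.mem_univ i), hp⟩

theorem exists_dotProduct_eq_one_of_gcd_eq_one {ι : Type*} [Fintype ι] {p : ι → ℤ}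
    (hp : Finset.univ.gcd p = 1) :
    ∃ c : ι → ℤ, c ⬝ᵥ p = 1 ∧
      (Finset.univ.filter (c · ≠ 0)).card ≤ (Finset.univ.image p).card := by
  classical
  -- One index for each value of `p` is enough: the gcd depends only on the set of values.
  obtain ⟨S, -, hinj, himage⟩ := Finset.exists_subset_injOn_image_eq_of_surjOn (f := p)
    Set.univ (Finset.univ.image p) (by simp [Set.SurjOn])
  have gcd_S : S.gcd p = 1 := by
    rw [Finset.gcd_eq_gcd_image, himage, ← Finset.gcd_eq_gcd_image, hp]
  obtain ⟨c, hc⟩ := Finset.gcd_eq_sum_mul S p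
  refine ⟨fun i => if i ∈ S then c i else 0, ?_, ?_⟩
  · simp only [dotProduct, ite_mul, zero_mul, Finset.sum_ite_mem, Finset.univ_inter]
    rw [← gcd_S, hc]
    exact Finset.sum_congr rfl fun i _ => mul_comm _ _
  · rw [← himage, Finset.card_image_of_injOn hinj]
    refine Finset.card_le_card fun i hi => ?_
    by_contra hiS
    simp [hiS] at hi

theorem card_filter_ne_zero_le_sum_abs {ι : Type*} [Fintype ι] (f : ι → ℤ) :
    ((Finset.univ.filter (f · ≠ 0)).card : ℤ) ≤ ∑ j, |f j| := by
  rw [Finset.card_filter, Nat.cast_sum]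
  refine Finset.sum_le_sum fun j _ => ?_
  split_ifs with h
  · exact_mod_cast Int.one_le_abs h
  · exact abs_nonneg _

theorem card_filter_dotProduct_ne_zero_le {R ι κ : Type*} [NonUnitalNonAssocSemiring R]
    [DecidableEq R] [Fintype ι] [Fintype κ] {K : ℕ} (c : κ → R) {p : ι → κ → R}
    (hK : ∀ i, (Finset.univ.filter (p · i ≠ 0)).card ≤ K) :
    (Finset.univ.filter (c ⬝ᵥ p · ≠ 0)).card ≤ (Finset.univ.filter (c · ≠ 0)).card * K := by
  classical
  have subset_biUnion : Finset.univ.filter (c ⬝ᵥ p · ≠ 0) ⊆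
      (Finset.univ.filter (c · ≠ 0)).biUnion fun i => Finset.univ.filter (p · i ≠ 0) := by
    intro j hj
    obtain ⟨i, -, hi⟩ := Finset.exists_ne_zero_of_sum_ne_zero (Finset.mem_filter.1 hj).2
    simp only [Finset.mem_biUnion, Finset.mem_filter_univ]
    exact ⟨i, left_ne_zero_of_mul hi, right_ne_zero_of_mul hi⟩
  exact (Finset.card_le_card subset_biUnion).trans
    (Finset.card_biUnion_le_card_mul _ _ K fun i _ => hK i)

theorem exists_dotProduct_eq_one_card_le {ι κ : Type*} [Fintype ι] [Fintype κ] {p : ι → κ → ℤ}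
    {D : ℕ} (hD : ∀ i, ∑ j, |p j i| ≤ D) {j : ι} (hp : Finset.univ.gcd (p j) = 1) :
    ∃ c : κ → ℤ, c ⬝ᵥ p j = 1 ∧
      (Finset.univ.filter (c ⬝ᵥ p · ≠ 0)).card ≤ (2 * D + 1) * D := by
  obtain ⟨c, hc, hcard⟩ := exists_dotProduct_eq_one_of_gcd_eq_one hp
  have image_subset : Finset.univ.image (p j) ⊆ Finset.Icc (-D : ℤ) D := by
    refine Finset.image_subset_iff.2 fun i _ => Finset.mem_Icc.2 (abs_le.1 ?_)
    exact (Finset.single_le_sum (f := fun k => |p k i|) (fun _ _ => abs_nonneg _)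
      (Finset.mem_univ j)).trans (hD i)
  have support_card : (Finset.univ.filter (c · ≠ 0)).card ≤ 2 * D + 1 := by
    have := hcard.trans (Finset.card_le_card image_subset)
    rw [Int.card_Icc] at this
    omega
  refine ⟨c, hc, (card_filter_dotProduct_ne_zero_le c fun i => ?_).trans
    (Nat.mul_le_mul_right D support_card)⟩
  exact_mod_cast (card_filter_ne_zero_le_sum_abs _).trans (hD i)

end PrimitiveVector

theorem exists_forall_lt_not_rel_of_card_filter_le {ι : Type*} (r : ι → ι → Prop) [DecidableRel r]
    {K : ℕ} (N : ℕ) (S : Finset ι) (hK : ∀ j ∈ S, (S.filter (r j)).card ≤ K)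
    (hS : N * (K + 1) ≤ S.card) :
    ∃ e : Fin N → ι, (∀ a, e a ∈ S) ∧ ∀ a b, a < b → ¬ r (e a) (e b) := by
  induction N generalizing S with
  | zero => exact ⟨Fin.elim0, fun a => a.elim0, fun a => a.elim0⟩
  | succ N ih =>
    rw [Nat.succ_mul] at hS
    obtain ⟨j, hj⟩ : S.Nonempty := Finset.card_pos.1 (by omega)
    have card_split := Finset.card_filter_add_card_filter_not (s := S) (r j)
    obtain ⟨e, he, hr⟩ := ih (S.filter (¬ r j ·))
      (fun k hk => (Finset.card_le_card <| Finset.filter_subset_filter _ <|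
        Finset.filter_subset _ _).trans (hK k (Finset.filter_subset _ _ hk)))
      (by have := hK j hj; omega)
    simp only [Finset.mem_filter] at he
    refine ⟨Fin.cons j e, Fin.cases hj fun a => (he a).1, ?_⟩
    refine Fin.cases (Fin.cases (fun h => (lt_irrefl _ h).elim) fun b _ => (he b).2) fun a =>
      Fin.cases (fun h => (Fin.not_lt_zero _ h).elim) fun b hab => ?_
    exact hr a b (Fin.succ_lt_succ_iff.1 hab)

section UnimodularCompletion

theorem exists_isUnit_det_col_eq_of_mul_eq_one {R : Type*} [CommRing R] [IsDomain R]
    [IsPrincipalIdealRing R] {N n : ℕ} {L : Matrix (Fin N) (Fin n) R}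
    {W : Matrix (Fin n) (Fin N) R} (hLW : L * W = 1) :
    ∃ (hN : N ≤ n) (M : Matrix (Fin n) (Fin n) R),
      IsUnit M.det ∧ ∀ a, M.col (Fin.castLE hN a) = W.col a := by
  have hinv : Function.LeftInverse L.mulVecLin W.mulVecLin := fun x => by
    rw [Matrix.mulVecLin_apply, Matrix.mulVecLin_apply, Matrix.mulVec_mulVec, hLW,
      Matrix.one_mulVec]
  have hcompl : IsCompl (LinearMap.range W.mulVecLin) (LinearMap.ker L.mulVecLin) := by
    refine ⟨Submodule.disjoint_def.2 ?_, Submodule.codisjoint_iff_exists_add_eq.2 fun y => ?_⟩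
    · rintro _ ⟨x, rfl⟩ hx
      rw [← hinv x, LinearMap.mem_ker.1 hx, map_zero]
    · refine ⟨_, y - W.mulVecLin (L.mulVecLin y), ⟨L.mulVecLin y, rfl⟩, ?_, add_sub_cancel _ y⟩
      rw [LinearMap.mem_ker, map_sub, hinv, sub_self]
  let m := Module.finrank R (LinearMap.ker L.mulVecLin)
  let b₀ : Module.Basis (Fin N ⊕ Fin m) R (Fin n → R) :=
    (((Pi.basisFun R (Fin N)).map (LinearEquiv.ofLeftInverse hinv)).prod
      (Module.finBasis R (LinearMap.ker L.mulVecLin))).map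
        (Submodule.prodEquivOfIsCompl _ _ hcompl)
  have hm : N + m = n := by simpa using (Module.finrank_eq_card_basis b₀).symm
  let b := b₀.reindex (finSumFinEquiv.trans (finCongr hm))
  have hN : N ≤ n := hm ▸ Nat.le_add_right N m
  refine ⟨hN, (Pi.basisFun R (Fin n)).toMatrix b, ?_, fun a => ?_⟩
  · exact Module.Basis.det_apply (Pi.basisFun R (Fin n)) b ▸ (Pi.basisFun R (Fin n)).isUnit_det b
  · have hb : b (Fin.castLE hN a) = b₀ (Sum.inl a) := by
      rw [Module.Basis.reindex_apply]
      congr 1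
      rw [Equiv.symm_apply_eq]
      rfl
    have hb₀ : b₀ (Sum.inl a) = W.mulVecLin (Pi.single a 1) := by
      simp [b₀, -Matrix.mulVecLin_apply]
    ext i
    rw [Matrix.col_apply, Module.Basis.toMatrix_apply, Pi.basisFun_repr, hb, hb₀,
      Matrix.mulVecLin_apply, Matrix.mulVec_single_one]

theorem exists_isUnit_det_col_eq_of_sum_abs_le {ι : Type*} [Fintype ι] {n D : ℕ}
    {p : ι → Fin n → ℤ} (hp : ∀ j, Finset.univ.gcd (p j) = 1) (hD : ∀ i, ∑ j, |p j i| ≤ D)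
    {N : ℕ} (hN : N * ((2 * D + 1) * D + 1) ≤ Fintype.card ι) :
    ∃ e : Fin N → ι, Function.Injective e ∧ ∃ (hNn : N ≤ n) (M : Matrix (Fin n) (Fin n) ℤ),
      IsUnit M.det ∧ ∀ a, M.col (Fin.castLE hNn a) = p (e a) := by
  choose c hc hcard using fun j => exists_dotProduct_eq_one_card_le hD (hp j)
  obtain ⟨e, -, he⟩ := exists_forall_lt_not_rel_of_card_filter_le (fun j k => c j ⬝ᵥ p k ≠ 0)
    N Finset.univ (fun j _ => hcard j) hN
  simp only [not_not] at he
  have e_injective : Function.Injective e := Function.Injective.of_lt_imp_ne fun a b hab heq =>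
    one_ne_zero ((hc (e a)).symm.trans (heq ▸ he a b hab))
  let C : Matrix (Fin N) (Fin n) ℤ := Matrix.of (c ∘ e)
  let W : Matrix (Fin n) (Fin N) ℤ := (Matrix.of (p ∘ e)).transpose
  have det_eq_one : (C * W).det = 1 := by
    rw [Matrix.det_of_isLowerTriangular (C * W) fun a b hab => he a b hab]
    exact Finset.prod_eq_one fun a _ => hc (e a)
  have leftInverse : ((C * W)⁻¹ * C) * W = 1 := by
    rw [Matrix.mul_assoc, Matrix.nonsing_inv_mul _ (det_eq_one ▸ isUnit_one)]
  exact ⟨e, e_injective, exists_isUnit_det_col_eq_of_mul_eq_one leftInverse⟩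

end UnimodularCompletion

section Lattice

/-- The inclusion of the lattice `ℤ^ι` into `ℝ^ι`, bundled as an additive homomorphism. -/
noncomputable def latticeCast (ι : Type*) : (ι → ℤ) →+ (ι → ℝ) :=
  (Int.castAddHom ℝ).compLeft ι

variable {n N : ℕ} {P Q : Set (Fin n → ℝ)}

theorem latticeCast_apply {ι : Type*} (v : ι → ℤ) (i : ι) : latticeCast ι v i = v i := rfl

theorem latticeCast_injective (ι : Type*) : Function.Injective (latticeCast ι) :=
  Int.cast_injective.comp_left

theorem isIntegralPolytope_iff : IsIntegralPolytope P ↔ ∃ V : Finset (Fin n → ℤ), V.Nonempty ∧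
    P = convexHull ℝ (latticeCast (Fin n) '' V) :=
  Iff.rfl

theorem isIntegralPolytope_zero : IsIntegralPolytope (0 : Set (Fin n → ℝ)) :=
  isIntegralPolytope_iff.2 ⟨{0}, Finset.singleton_nonempty 0, by simp [Set.singleton_zero]⟩

theorem IsIntegralPolytope.add (hP : IsIntegralPolytope P) (hQ : IsIntegralPolytope Q) :
    IsIntegralPolytope (P + Q) := by
  classical
  obtain ⟨V, hV, rfl⟩ := isIntegralPolytope_iff.1 hP
  obtain ⟨W, hW, rfl⟩ := isIntegralPolytope_iff.1 hQ
  exact isIntegralPolytope_iff.2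
    ⟨V + W, hV.add hW, by rw [← convexHull_add, Finset.coe_add, Set.image_add]⟩

theorem isIntegralPolytope_sum {ι : Type*} (s : Finset ι) {Q : ι → Set (Fin n → ℝ)}
    (hQ : ∀ j ∈ s, IsIntegralPolytope (Q j)) : IsIntegralPolytope (∑ j ∈ s, Q j) :=
  Finset.sum_induction Q IsIntegralPolytope (fun _ _ => .add) isIntegralPolytope_zero hQ

theorem isPosDimLatticePolytope_segment {a b : Fin n → ℤ} (hab : a ≠ b) :
    IsPosDimLatticePolytope (segment ℝ (latticeCast _ a) (latticeCast _ b)) := by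
  classical
  refine ⟨isIntegralPolytope_iff.2 ⟨{a, b}, by simp, ?_⟩, fun h => hab ?_⟩
  · rw [← convexHull_pair, Finset.coe_pair, Set.image_pair]
  · exact latticeCast_injective _ (h (left_mem_segment ℝ _ _) (right_mem_segment ℝ _ _))

theorem IsPosDimLatticePolytope.exists_segment_subset (hQ : IsPosDimLatticePolytope Q) :
    ∃ a p : Fin n → ℤ, Finset.univ.gcd p = 1 ∧
      segment ℝ (latticeCast _ a) (latticeCast _ a + latticeCast _ p) ⊆ Q := by
  obtain ⟨hint, hnontriv⟩ := hQ
  obtain ⟨V, -, rfl⟩ := isIntegralPolytope_iff.1 hint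
  obtain ⟨_, ⟨a, ha, rfl⟩, _, ⟨b, hb, rfl⟩, hab⟩ : (latticeCast (Fin n) '' V).Nontrivial := by
    rw [← Set.not_subsingleton_iff]
    exact fun h => hnontriv (by rwa [(h.convex (𝕜 := ℝ)).convexHull_eq])
  obtain ⟨g, hg, p, hgp, hp⟩ := exists_pos_smul_eq_gcd_eq_one
    (sub_ne_zero.2 (ne_of_apply_ne (latticeCast (Fin n)) hab.symm))
  have hconvex := convex_convexHull ℝ (latticeCast (Fin n) '' V)
  have ha' := subset_convexHull ℝ _ (Set.mem_image_of_mem (latticeCast (Fin n)) ha)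
  have hb' := subset_convexHull ℝ _ (Set.mem_image_of_mem (latticeCast (Fin n)) hb)
  refine ⟨a, p, hp, hconvex.segment_subset ha' (hconvex.segment_subset ha' hb' ?_)⟩
  have hg' : (1 : ℝ) ≤ g := by exact_mod_cast hg
  rw [segment_eq_image']
  refine ⟨(g : ℝ)⁻¹, ⟨by positivity, inv_le_one_of_one_le₀ hg'⟩, ?_⟩
  dsimp only
  rw [← map_sub, hgp, map_zsmul, ← Int.cast_smul_eq_zsmul ℝ, inv_smul_smul₀ (by positivity)]

theorem affApply_eq (M : Matrix (Fin n) (Fin n) ℤ) (lam : Fin n → ℤ) (x : Fin n → ℝ) :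
    affApply M lam x = latticeCast _ lam + ∑ j, x j • latticeCast _ (M.col j) := by
  ext i
  simp only [affApply, Pi.add_apply, Finset.sum_apply, Pi.smul_apply, smul_eq_mul,
    latticeCast_apply, Matrix.col_apply, add_comm, mul_comm]

theorem hasUnitCube_iff :
    HasUnitCube P N ↔ ∃ (hN : N ≤ n) (M : Matrix (Fin n) (Fin n) ℤ) (lam : Fin n → ℤ),
      IsUnit M.det ∧ latticeCast _ lam +ᵥ
        parallelepiped (latticeCast (Fin n) ∘ M.col ∘ Fin.castLE hN) ⊆ P := by
  refine exists_prop.symm.trans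
    (exists_congr fun hN => exists₂_congr fun M lam => and_congr_right fun _ => ?_)
  have sum_eq {x : Fin n → ℝ} (hx : ∀ i : Fin n, N ≤ i → x i = 0) :
      ∑ i, x i • latticeCast _ (M.col i) =
        ∑ a, x (Fin.castLE hN a) • latticeCast _ (M.col (Fin.castLE hN a)) :=
    (Fintype.sum_of_injective _ (Fin.castLE_injective hN) _ _ (fun i hi => by
      rw [hx i (not_lt.1 fun h => hi ⟨⟨i, h⟩, rfl⟩), zero_smul]) fun _ => rfl).symm
  constructor
  · rintro hP _ ⟨_, ⟨t, ht, rfl⟩, rfl⟩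
    have extend_mem := extend_zero_mem_Icc (Fin.castLE hN) ht
    have extend_eq_zero (i : Fin n) (hi : N ≤ i) : Function.extend (Fin.castLE hN) t 0 i = 0 :=
      Function.extend_apply' _ _ _ fun ⟨a, ha⟩ => (ha ▸ a.2 : (i : ℕ) < N).not_ge hi
    have := hP _ fun i => ⟨fun _ => ⟨extend_mem.1 i, extend_mem.2 i⟩, extend_eq_zero i⟩
    simp only [affApply_eq, sum_eq extend_eq_zero, (Fin.castLE_injective hN).extend_apply] at this
    exact this
  · intro hP x hx
    rw [affApply_eq, sum_eq fun i => (hx i).2]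
    exact hP (Set.vadd_mem_vadd_set
      ⟨_, ⟨fun a => ((hx _).1 a.2).1, fun a => ((hx _).1 a.2).2⟩, rfl⟩)

-- `N + 1` rather than `N`: the empty Minkowski sum is `{0}`, which need not be contained in `P`.
theorem HasUnitCube.hasMinkowskiLength (h : HasUnitCube P (N + 1)) :
    HasMinkowskiLength P (N + 1) := by
  obtain ⟨hN, M, lam, hM, hP⟩ := hasUnitCube_iff.1 h
  let a : Fin (N + 1) → Fin n → ℤ := Pi.single 0 lam
  let v (j : Fin (N + 1)) : Fin n → ℤ := M.col (Fin.castLE hN j)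
  have v_ne_zero (j : Fin (N + 1)) : v j ≠ 0 := fun hj =>
    hM.ne_zero (Matrix.det_eq_zero_of_column_eq_zero _ (congrFun hj))
  have posDim (j : Fin (N + 1)) :=
    isPosDimLatticePolytope_segment (left_ne_add (a := a j).2 (v_ne_zero j))
  refine ⟨_, ?_, isIntegralPolytope_sum _ fun j _ => (posDim j).1, N + 1, le_rfl, _, posDim, rfl⟩
  have sum_a : ∑ j, a j = lam := by simp [a]
  simp_rw [map_add, sum_segment_add_eq_vadd_parallelepiped, ← map_sum, sum_a]
  exact hP

theorem HasMinkowskiLength.mono {N' : ℕ} (h : HasMinkowskiLength P N') (hN : N ≤ N') :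
    HasMinkowskiLength P N := by
  obtain ⟨Q, hQP, hQ, l, hl, hQs⟩ := h
  exact ⟨Q, hQP, hQ, l, hN.trans hl, hQs⟩

theorem HasMinkowskiLength.exists_vadd_parallelepiped_subset (h : HasMinkowskiLength P N) :
    ∃ l, N ≤ l ∧ ∃ (a : Fin n → ℤ) (p : Fin l → Fin n → ℤ),
      (∀ j, Finset.univ.gcd (p j) = 1) ∧
        latticeCast _ a +ᵥ parallelepiped (latticeCast (Fin n) ∘ p) ⊆ P := by
  obtain ⟨_, hP, -, l, hl, Q, hQ, rfl⟩ := h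
  choose a p hp hsegment using fun j => (hQ j).exists_segment_subset
  refine ⟨l, hl, ∑ j, a j, p, hp, ?_⟩
  rw [map_sum, ← sum_segment_add_eq_vadd_parallelepiped]
  exact (Set.finsetSum_subset_finsetSum _ _ _ fun j _ => hsegment j).trans hP

theorem HasMinkowskiLength.hasUnitCube {D : ℕ} (hD : ∀ x ∈ P, ∀ y ∈ P, dist x y ≤ D)
    (h : HasMinkowskiLength P (N * ((2 * D + 1) * D + 1))) : HasUnitCube P N := by
  obtain ⟨l, hl, a, p, hp, hP⟩ := h.exists_vadd_parallelepiped_subset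
  have hsum (i : Fin n) : ∑ j, |p j i| ≤ D := by
    have := sum_abs_le_of_vadd_parallelepiped_dist_le _ _
      (fun y hy z hz => hD y (hP hy) z (hP hz)) i
    simp only [Function.comp_apply, latticeCast_apply] at this
    exact_mod_cast this
  obtain ⟨e, he, hN, M, hM, hcol⟩ := exists_isUnit_det_col_eq_of_sum_abs_le hp hsum
    (hl.trans_eq (Fintype.card_fin l).symm)
  refine hasUnitCube_iff.2 ⟨hN, M, a, hM, .trans (Set.vadd_set_mono ?_) hP⟩
  rw [show M.col ∘ Fin.castLE hN = p ∘ e from funext hcol]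
  exact parallelepiped_comp_subset he (latticeCast _ ∘ p)

theorem InBox.dist_le {q : ℕ} (hP : InBox q P) {x y : Fin n → ℝ} (hx : x ∈ P) (hy : y ∈ P) :
    dist x y ≤ q := by
  refine (dist_pi_le_iff q.cast_nonneg).2 fun i => (abs_le.2 ⟨?_, ?_⟩ : |x i - y i| ≤ q) <;>
    linarith [hP x hx i, hP y hy i]

end Lattice

theorem stmt16_general {ι : Type*} {n : ι → ℕ} {P : ∀ i, Set (Fin (n i) → ℝ)} {D : ℕ}
    (hD : ∀ i, ∀ x ∈ P i, ∀ y ∈ P i, dist x y ≤ D) :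
    (∀ N, ∃ i, HasUnitCube (P i) N) ↔ (∀ N, ∃ i, HasMinkowskiLength (P i) N) := by
  constructor <;> intro h N
  · obtain ⟨i, hi⟩ := h (N + 1)
    exact ⟨i, hi.hasMinkowskiLength.mono N.le_succ⟩
  · obtain ⟨i, hi⟩ := h (N * ((2 * D + 1) * D + 1))
    exact ⟨i, hi.hasUnitCube (hD i)⟩

/-- For an infinite family of toric codes, the sequence `M(P_i)` (largest unimodular
unit hypercube dimension) is unbounded iff the sequence `L(P_i)` (full Minkowski
length) is unbounded. -/
theorem stmt16 (q : ℕ) (hq : IsPrimePow q) (n : ℕ → ℕ) (P : ∀ i, Set (Fin (n i) → ℝ))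
    (hpoly : ∀ i, IsIntegralPolytope (P i)) (hbox : ∀ i, InBox q (P i)) :
    (∀ N, ∃ i, HasUnitCube (P i) N) ↔ (∀ N, ∃ i, HasMinkowskiLength (P i) N) :=
  stmt16_general fun i _ hx _ hy => (hbox i).dist_le hx hy
end
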